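/- (Theorem 5, part 3) Let y* ∈ Ω solve the variational inequality ⟨g(y*), y − y*⟩ ≤ 0 for all y ∈ Ω. Suppose there exists δ > 0 with ⟨g(y) − g(y*), y − y*⟩ ≤ −δ‖y − y*‖² for all y ∈ Ω, and g is L-Lipschitz on Ω: ‖g(y₁) − g(y₂)‖ ≤ L‖y₁ − y₂‖ for all y₁, y₂ ∈ Ω. Assume κ = δ/L satisfies 0 ≤ κ ≤ 0.5, and take t = (2L)⁻¹. Then the extra pseudo-gradient iterates ŷ_s = P_Ω(y_s + t·g(y_s)), y_{s+1} = P_Ω(y_s + t·g(ŷ_s)) satisfy ‖y_{s+1} − y*‖ ≤ √(1 − 0.5κ)·‖y_s − y*‖ for every s ≥ 0. -/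

import Mathlib

open Matrix Filter
open scoped BigOperators

noncomputable section

/-- Vectors in ℝ^k. -/
abbrev Vec (k : ℕ) := Fin k → ℝ

/-- Standard Euclidean inner product on ℝ^k. -/
def ip {k : ℕ} (u v : Vec k) : ℝ := ∑ i, u i * v i

/-- Standard Euclidean norm on ℝ^k. -/
def nrm {k : ℕ} (u : Vec k) : ℝ := Real.sqrt (ip u u)

/-- The space ℝⁿ × ℝⁿ × ℝᵐ of triples y = (x, λ, v). -/
abbrev Triple (n m : ℕ) := Vec n × Vec n × Vec m

/-- Euclidean inner product on the triple space. -/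
def ipT {n m : ℕ} (y z : Triple n m) : ℝ :=
  ip y.1 z.1 + ip y.2.1 z.2.1 + ip y.2.2 z.2.2

/-- Euclidean norm on the triple space. -/
def nrmT {n m : ℕ} (y : Triple n m) : ℝ := Real.sqrt (ipT y y)

/-- Ω = ℝ₊ⁿ × ℝ₊ⁿ × ℝ₊ᵐ. -/
def Om (n m : ℕ) : Set (Triple n m) :=
  {y | (∀ j, 0 ≤ y.1 j) ∧ (∀ j, 0 ≤ y.2.1 j) ∧ (∀ i, 0 ≤ y.2.2 i)}

/-- The operator g(x, λ, v) = ((I − A)ᵀλ − p(x) − Bᵀv, c(λ) − (I − A)x, Bx − r(v)). -/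
def gOp {n m : ℕ} (A : Matrix (Fin n) (Fin n) ℝ) (B : Matrix (Fin m) (Fin n) ℝ)
    (p c : Vec n → Vec n) (r : Vec m → Vec m) (y : Triple n m) : Triple n m :=
  ((1 - A)ᵀ *ᵥ y.2.1 - p y.1 - Bᵀ *ᵥ y.2.2,
   c y.2.1 - (1 - A) *ᵥ y.1,
   B *ᵥ y.1 - r y.2.2)

/-- P_Ω : componentwise positive part (Euclidean projection onto Ω). -/
def projOm {n m : ℕ} (y : Triple n m) : Triple n m :=
  (fun j => max (y.1 j) 0, fun j => max (y.2.1 j) 0, fun i => max (y.2.2 i) 0)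

/-!
Projecting `x + v` onto `Ω` satisfies a three-point inequality against every `w ∈ Ω`. For an
extragradient step from `x` with predictor `h = P (x + a)` and corrector `z = P (x + b)`, use it
for the corrector against `w` and for the predictor against `z`: the terms in `‖z - x‖²` cancel,
and Young's inequality absorbs `2⟪b - a, z - h⟫` into `‖h - z‖²`, so that
`‖z - w‖² ≤ ‖x - w‖² - ‖h - x‖² + ‖b - a‖² + 2⟪b, h - w⟫`.
With `a = t g(x)`, `b = t g(h)`, the Lipschitz bound controls `‖b - a‖²` by `(tL)²‖h - x‖²` and
strong monotonicity bounds the last term by `-2tδ‖h - w‖²`. If `(tL)² + 2tδ ≤ 1`, the squared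
distance to `w` therefore drops by at least `2tδ(‖h - x‖² + ‖h - w‖²) ≥ tδ‖x - w‖²`.
-/

open scoped RealInnerProductSpace

theorem norm_sub_sq_le_two_mul_add {E : Type*} [SeminormedAddCommGroup E] (x h w : E) :
    ‖x - w‖ ^ 2 ≤ 2 * (‖h - x‖ ^ 2 + ‖h - w‖ ^ 2) := by
  have triangle : ‖x - w‖ ≤ ‖h - x‖ + ‖h - w‖ := by
    simpa only [norm_sub_rev h x] using norm_sub_le_norm_sub_add_norm_sub x h w
  calc ‖x - w‖ ^ 2 ≤ (‖h - x‖ + ‖h - w‖) ^ 2 := by gcongr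
    _ ≤ 2 * (‖h - x‖ ^ 2 + ‖h - w‖ ^ 2) := add_sq_le

section InnerProductSpace

variable {E : Type*} [SeminormedAddCommGroup E] [InnerProductSpace ℝ E]

/-- `P` is a projection onto `Ω`, expressed by the variational inequality that characterises the
nearest point of a convex set; convexity of `Ω` itself is not part of the definition. -/
structure IsProjectionOnto (P : E → E) (Ω : Set E) : Prop where
  mem : ∀ u, P u ∈ Ω
  inner_sub_nonpos : ∀ u, ∀ w ∈ Ω, ⟪u - P u, w - P u⟫ ≤ 0

theorem two_mul_inner_le_norm_sq_add_norm_sq (u v : E) :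
    2 * ⟪u, v⟫ ≤ ‖u‖ ^ 2 + ‖v‖ ^ 2 := by
  linarith [norm_sub_sq_real u v, sq_nonneg ‖u - v‖]

theorem inner_le_of_variational_of_strongMonotone {Ω : Set E} {g : E → E} {w : E} {δ : ℝ}
    (hVI : ∀ y ∈ Ω, ⟪g w, y - w⟫ ≤ 0)
    (hmono : ∀ y ∈ Ω, ⟪g y - g w, y - w⟫ ≤ -δ * ‖y - w‖ ^ 2) {y : E} (hy : y ∈ Ω) :
    ⟪g y, y - w⟫ ≤ -δ * ‖y - w‖ ^ 2 := by
  have hsplit : ⟪g y - g w, y - w⟫ = ⟪g y, y - w⟫ - ⟪g w, y - w⟫ := inner_sub_left _ _ _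
  linarith [hVI y hy, hmono y hy]

namespace IsProjectionOnto

variable {P : E → E} {Ω : Set E}

theorem norm_proj_add_sub_sq_le (hP : IsProjectionOnto P Ω) (x v : E) {w : E} (hw : w ∈ Ω) :
    ‖P (x + v) - w‖ ^ 2 ≤
      ‖x - w‖ ^ 2 - ‖P (x + v) - x‖ ^ 2 + 2 * ⟪v, P (x + v) - w⟫ := by
  set z := P (x + v)
  have hvar : ⟪z - x, z - w⟫ ≤ ⟪v, z - w⟫ := by
    have hz : ⟪x + v - z, w - z⟫ = ⟪z - x, z - w⟫ - ⟪v, z - w⟫ := by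
      rw [← inner_sub_left, ← inner_neg_neg, neg_sub, neg_sub, sub_add_eq_sub_sub]
    linarith [hP.inner_sub_nonpos (x + v) w hw]
  have hexpand : ‖x - w‖ ^ 2 = ‖z - w‖ ^ 2 - 2 * ⟪z - x, z - w⟫ + ‖z - x‖ ^ 2 := by
    rw [← sub_sub_sub_cancel_left w x z, norm_sub_sq_real, real_inner_comm]
  linarith

theorem norm_extragradient_sub_sq_le (hP : IsProjectionOnto P Ω) (x a b : E) {w : E}
    (hw : w ∈ Ω) :
    ‖P (x + b) - w‖ ^ 2 ≤
      ‖x - w‖ ^ 2 - ‖P (x + a) - x‖ ^ 2 + ‖b - a‖ ^ 2 + 2 * ⟪b, P (x + a) - w⟫ := by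
  have hcorrector := hP.norm_proj_add_sub_sq_le x b hw
  have hpredictor := hP.norm_proj_add_sub_sq_le x a (hP.mem (x + b))
  set h := P (x + a)
  set z := P (x + b)
  have hyoung : 2 * ⟪b - a, z - h⟫ ≤ ‖b - a‖ ^ 2 + ‖h - z‖ ^ 2 := by
    simpa only [norm_sub_rev h z] using two_mul_inner_le_norm_sq_add_norm_sq (b - a) (z - h)
  have hinner : ⟪a, h - z⟫ + ⟪b, z - w⟫ = ⟪b - a, z - h⟫ + ⟪b, h - w⟫ := by
    simp only [inner_sub_left, inner_sub_right]
    ring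
  rw [norm_sub_rev x z] at hpredictor
  linarith

theorem norm_extragradient_sub_le (hP : IsProjectionOnto P Ω) {g : E → E} {w : E} (hw : w ∈ Ω)
    {δ L t : ℝ} (hδ : 0 ≤ δ) (ht : 0 ≤ t) (hstep : (t * L) ^ 2 + 2 * (t * δ) ≤ 1)
    (hmono : ∀ y ∈ Ω, ⟪g y, y - w⟫ ≤ -δ * ‖y - w‖ ^ 2)
    (hlip : ∀ y₁ ∈ Ω, ∀ y₂ ∈ Ω, ‖g y₁ - g y₂‖ ≤ L * ‖y₁ - y₂‖) {x : E} (hx : x ∈ Ω) :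
    ‖P (x + t • g (P (x + t • g x))) - w‖ ≤ √(1 - t * δ) * ‖x - w‖ := by
  set h := P (x + t • g x)
  have hmem : h ∈ Ω := hP.mem _
  have hdiff : ‖t • g h - t • g x‖ ^ 2 ≤ (t * L) ^ 2 * ‖h - x‖ ^ 2 := by
    calc ‖t • g h - t • g x‖ ^ 2 = (t * ‖g h - g x‖) ^ 2 := by
          rw [← smul_sub, norm_smul, Real.norm_of_nonneg ht]
      _ ≤ (t * (L * ‖h - x‖)) ^ 2 := by gcongr; exact hlip h hmem x hx
      _ = (t * L) ^ 2 * ‖h - x‖ ^ 2 := by ring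
  have hdescent : 2 * ⟪t • g h, h - w⟫ ≤ -(2 * (t * δ)) * ‖h - w‖ ^ 2 := by
    rw [real_inner_smul_left]
    linarith [mul_le_mul_of_nonneg_left (hmono h hmem) ht]
  have hsq : ‖P (x + t • g h) - w‖ ^ 2 ≤ (1 - t * δ) * ‖x - w‖ ^ 2 := by
    calc ‖P (x + t • g h) - w‖ ^ 2
        ≤ ‖x - w‖ ^ 2 - ‖h - x‖ ^ 2 + ‖t • g h - t • g x‖ ^ 2 + 2 * ⟪t • g h, h - w⟫ :=
          hP.norm_extragradient_sub_sq_le x (t • g x) (t • g h) hw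
      _ ≤ ‖x - w‖ ^ 2 - (1 - (t * L) ^ 2) * ‖h - x‖ ^ 2 - 2 * (t * δ) * ‖h - w‖ ^ 2 := by
          linarith
      _ ≤ ‖x - w‖ ^ 2 - 2 * (t * δ) * ‖h - x‖ ^ 2 - 2 * (t * δ) * ‖h - w‖ ^ 2 := by
          gcongr; linarith
      _ = ‖x - w‖ ^ 2 - t * δ * (2 * (‖h - x‖ ^ 2 + ‖h - w‖ ^ 2)) := by ring
      _ ≤ ‖x - w‖ ^ 2 - t * δ * ‖x - w‖ ^ 2 := by
          gcongr; exact norm_sub_sq_le_two_mul_add x h w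
      _ = (1 - t * δ) * ‖x - w‖ ^ 2 := by ring
  calc ‖P (x + t • g h) - w‖ ≤ √((1 - t * δ) * ‖x - w‖ ^ 2) := Real.le_sqrt_of_sq_le hsq
    _ = √(1 - t * δ) * ‖x - w‖ := by
      rw [Real.sqrt_mul' _ (sq_nonneg _), Real.sqrt_sq (norm_nonneg _)]

end IsProjectionOnto

theorem stmt19_general {P : E → E} {Ω : Set E} (hP : IsProjectionOnto P Ω) (g : E → E)
    {ys : E} (hys : ys ∈ Ω) (hVI : ∀ y ∈ Ω, ⟪g ys, y - ys⟫ ≤ 0)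
    {δ L t : ℝ} (hδ : 0 ≤ δ) (ht : 0 ≤ t) (hstep : (t * L) ^ 2 + 2 * (t * δ) ≤ 1)
    (hmono : ∀ y ∈ Ω, ⟪g y - g ys, y - ys⟫ ≤ -δ * ‖y - ys‖ ^ 2)
    (hlip : ∀ y₁ ∈ Ω, ∀ y₂ ∈ Ω, ‖g y₁ - g y₂‖ ≤ L * ‖y₁ - y₂‖)
    {y yh : ℕ → E} (hy0 : y 0 ∈ Ω) (hyh : ∀ s, yh s = P (y s + t • g (y s)))
    (hiter : ∀ s, y (s + 1) = P (y s + t • g (yh s))) (s : ℕ) :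
    ‖y (s + 1) - ys‖ ≤ √(1 - t * δ) * ‖y s - ys‖ := by
  have hmem : y s ∈ Ω := by
    cases s with
    | zero => exact hy0
    | succ k => exact hiter k ▸ hP.mem _
  rw [hiter, hyh]
  exact hP.norm_extragradient_sub_le hys hδ ht hstep
    (fun _ hy => inner_le_of_variational_of_strongMonotone hVI hmono hy) hlip hmem

end InnerProductSpace

section Triple

theorem ip_eq_dotProduct {k : ℕ} (u v : Vec k) : ip u v = u ⬝ᵥ v := rfl

theorem ip_self_nonneg {k : ℕ} (u : Vec k) : 0 ≤ ip u u :=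
  Finset.sum_nonneg fun _ _ => mul_self_nonneg _

theorem ip_sub_posPart_nonpos {k : ℕ} (u w : Vec k) (hw : ∀ j, 0 ≤ w j) :
    ip (u - fun j => max (u j) 0) (w - fun j => max (u j) 0) ≤ 0 := by
  refine Finset.sum_nonpos fun j _ => ?_
  rcases le_total (u j) 0 with hu | hu
  · simpa only [Pi.sub_apply, max_eq_right hu, sub_zero] using
      mul_nonpos_of_nonpos_of_nonneg hu (hw j)
  · simp only [Pi.sub_apply, max_eq_left hu, sub_self, zero_mul, le_refl]

variable {n m : ℕ}

theorem projOm_mem (u : Triple n m) : projOm u ∈ Om n m :=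
  ⟨fun _ => le_max_right _ _, fun _ => le_max_right _ _, fun _ => le_max_right _ _⟩

theorem ipT_sub_projOm_nonpos (u w : Triple n m) (hw : w ∈ Om n m) :
    ipT (u - projOm u) (w - projOm u) ≤ 0 :=
  add_nonpos (add_nonpos (ip_sub_posPart_nonpos _ _ hw.1) (ip_sub_posPart_nonpos _ _ hw.2.1))
    (ip_sub_posPart_nonpos _ _ hw.2.2)

/-- `ipT` as an inner product on the triple space. It is kept out of instance search, since the
product type already carries the sup norm. -/
abbrev tripleCore (n m : ℕ) : PreInnerProductSpace.Core ℝ (Triple n m) where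
  inner := ipT
  conj_inner_symm y z := by
    simp only [ipT, ip_eq_dotProduct, conj_trivial, dotProduct_comm]
  re_inner_nonneg y :=
    add_nonneg (add_nonneg (ip_self_nonneg _) (ip_self_nonneg _)) (ip_self_nonneg _)
  add_left x y z := by
    simp only [ipT, ip_eq_dotProduct, Prod.fst_add, Prod.snd_add, add_dotProduct]
    ring
  smul_left x y a := by
    simp only [ipT, ip_eq_dotProduct, Prod.smul_fst, Prod.smul_snd, smul_dotProduct, smul_eq_mul,
      conj_trivial]
    ring

end Triple

theorem sq_add_two_mul_le_one_of_div_le {δ L : ℝ} (hL : L ≠ 0) (hκ : δ / L ≤ 3 / 4) :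
    ((2 * L)⁻¹ * L) ^ 2 + 2 * ((2 * L)⁻¹ * δ) ≤ 1 := by
  have htL : (2 * L)⁻¹ * L = 1 / 2 := by field_simp
  have htδ : 2 * ((2 * L)⁻¹ * δ) = δ / L := by field_simp
  rw [htL, htδ]
  linarith

/-- Theorem 5, part 3: under strong monotonicity at y* and Lipschitz
continuity of g on Ω, if κ = δ/L ∈ [0, 0.5] and t = (2L)⁻¹, then the extra
pseudo-gradient iterates satisfy ‖y_{s+1} − y*‖ ≤ √(1 − 0.5κ)·‖y_s − y*‖. -/
theorem stmt19 {n m : ℕ} (hn : 0 < n) (hm : 0 < m)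
    (A : Matrix (Fin n) (Fin n) ℝ) (B : Matrix (Fin m) (Fin n) ℝ)
    (p c : Vec n → Vec n) (r : Vec m → Vec m)
    (ys : Triple n m) (hys : ys ∈ Om n m)
    (hVI : ∀ y ∈ Om n m, ipT (gOp A B p c r ys) (y - ys) ≤ 0)
    (δ L : ℝ) (hδ : 0 < δ) (hL : 0 < L)
    (hmono : ∀ y ∈ Om n m,
      ipT (gOp A B p c r y - gOp A B p c r ys) (y - ys) ≤ -δ * nrmT (y - ys) ^ 2)
    (hlip : ∀ y₁ ∈ Om n m, ∀ y₂ ∈ Om n m,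
      nrmT (gOp A B p c r y₁ - gOp A B p c r y₂) ≤ L * nrmT (y₁ - y₂))
    (hκ0 : 0 ≤ δ / L) (hκ1 : δ / L ≤ 0.5)
    (y yh : ℕ → Triple n m) (hy0 : y 0 ∈ Om n m)
    (hyh : ∀ s : ℕ, yh s = projOm (y s + (2 * L)⁻¹ • gOp A B p c r (y s)))
    (hiter : ∀ s : ℕ, y (s + 1) = projOm (y s + (2 * L)⁻¹ • gOp A B p c r (yh s))) :
    ∀ s : ℕ, nrmT (y (s + 1) - ys) ≤
      Real.sqrt (1 - 0.5 * (δ / L)) * nrmT (y s - ys) := by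
  have hrate : 0.5 * (δ / L) = (2 * L)⁻¹ * δ := by ring
  let := InnerProductSpace.Core.toSeminormedAddCommGroup (c := tripleCore n m)
  let := InnerProductSpace.ofCore (tripleCore n m)
  exact hrate ▸ stmt19_general ⟨projOm_mem, ipT_sub_projOm_nonpos⟩ (gOp A B p c r) hys hVI hδ.le
    (by positivity) (sq_add_two_mul_le_one_of_div_le hL.ne' (hκ1.trans (by norm_num)))
    hmono hlip hy0 hyh hiter
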